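/- arXiv:1803.10451 — 4 statements merged into one kernel-verified Lean document; each statement's English description precedes it below -/
import Mathlib

section
/- Let Γ^i_μ : ℝ^m × ℝ^n → ℝ (for 1 ≤ μ ≤ m, 1 ≤ i ≤ n) be continuously differentiable functions, and let f : ℝ^m → ℝ^n be a twice continuously differentiable map satisfying ∂f^i/∂x^μ(x) = Γ^i_μ(x, f(x)) for all x ∈ ℝ^m and all i, μ. Then for all x ∈ ℝ^m and all indices μ, ν, j: R^j_{μν}(x, f(x)) = 0, where R^j_{μν} := ∂Γ^j_ν/∂x^μ − ∂Γ^j_μ/∂x^ν + Σᵢ (Γ^i_μ ∂Γ^j_ν/∂y^i − Γ^i_ν ∂Γ^j_μ/∂y^i). -/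
/-- Necessity direction of the integrability Proposition: if `f` solves the
first-order PDE system `∂f^i/∂x^μ = Γ^i_μ(x, f(x))`, then the curvature
components `R^j_{μν}` vanish along the graph of `f`. -/
theorem stmt_6 {m n : ℕ}
    (Γ : Fin m → Fin n → ((Fin m → ℝ) × (Fin n → ℝ)) → ℝ)
    (hΓ : ∀ μ i, ContDiff ℝ 1 (Γ μ i))
    (f : (Fin m → ℝ) → (Fin n → ℝ)) (hf : ContDiff ℝ 2 f)
    (hsol : ∀ (x : Fin m → ℝ) (μ : Fin m) (i : Fin n),
      fderiv ℝ f x (Pi.single μ 1) i = Γ μ i (x, f x)) :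
    ∀ (x : Fin m → ℝ) (μ ν : Fin m) (j : Fin n),
      fderiv ℝ (Γ ν j) (x, f x) (Pi.single μ 1, 0)
        - fderiv ℝ (Γ μ j) (x, f x) (Pi.single ν 1, 0)
        + ∑ i : Fin n,
            (Γ μ i (x, f x) * fderiv ℝ (Γ ν j) (x, f x) (0, Pi.single i 1)
              - Γ ν i (x, f x) * fderiv ℝ (Γ μ j) (x, f x) (0, Pi.single i 1))
      = 0 := by
  intro x μ ν j
  have hd : Differentiable ℝ f := hf.differentiable (by norm_num)
  have hd2 : Differentiable ℝ (fderiv ℝ f) :=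
    (hf.fderiv_right (m := 1) (by norm_num)).differentiable (by norm_num)
  have hsymm : IsSymmSndFDerivAt ℝ f x :=
    hf.contDiffAt.isSymmSndFDerivAt (by simp)
  have key : ∀ α β : Fin m,
      fderiv ℝ (fderiv ℝ f) x (Pi.single α 1) (Pi.single β 1) j
        = fderiv ℝ (Γ β j) (x, f x) (Pi.single α 1, 0)
          + ∑ i : Fin n, Γ α i (x, f x) * fderiv ℝ (Γ β j) (x, f x) (0, Pi.single i 1) := by
    intro α β
    have h1 : HasFDerivAt (fun y => fderiv ℝ f y (Pi.single β 1) j)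
        ((ContinuousLinearMap.proj (R := ℝ) (φ := fun _ : Fin n => ℝ) j).comp
          ((ContinuousLinearMap.apply ℝ (Fin n → ℝ) (Pi.single β (1 : ℝ))).comp
            (fderiv ℝ (fderiv ℝ f) x))) x := by
      have h0 := (((ContinuousLinearMap.proj (R := ℝ) (φ := fun _ : Fin n => ℝ) j).comp
        (ContinuousLinearMap.apply ℝ (Fin n → ℝ)
          (Pi.single β (1 : ℝ) : Fin m → ℝ))).hasFDerivAt
          (x := fderiv ℝ f x)).comp x (hd2 x).hasFDerivAt
      exact h0
    have hG : HasFDerivAt (Γ β j) (fderiv ℝ (Γ β j) (x, f x)) (x, f x) :=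
      (((hΓ β j).differentiable (by norm_num)) (x, f x)).hasFDerivAt
    have h2 : HasFDerivAt (fun y => Γ β j (y, f y))
        ((fderiv ℝ (Γ β j) (x, f x)).comp
          ((ContinuousLinearMap.id ℝ (Fin m → ℝ)).prod (fderiv ℝ f x))) x :=
      HasFDerivAt.comp x hG ((hasFDerivAt_id x).prodMk (hd x).hasFDerivAt)
    have h3 : (fun y => fderiv ℝ f y (Pi.single β 1) j) = fun y => Γ β j (y, f y) :=
      funext fun y => hsol y β j
    rw [h3] at h1
    have h4 := congrArg (fun L => L (Pi.single α (1 : ℝ))) (h1.unique h2)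
    have h5 : fderiv ℝ (fderiv ℝ f) x (Pi.single α 1) (Pi.single β 1) j
        = fderiv ℝ (Γ β j) (x, f x) (Pi.single α 1, fderiv ℝ f x (Pi.single α 1)) := h4
    have h6 : ((Pi.single α (1 : ℝ) : Fin m → ℝ), fderiv ℝ f x (Pi.single α 1))
        = ((Pi.single α (1 : ℝ) : Fin m → ℝ), (0 : Fin n → ℝ))
          + ∑ i : Fin n, Γ α i (x, f x) •
            ((0 : Fin m → ℝ), (Pi.single i (1 : ℝ) : Fin n → ℝ)) := by
      refine Prod.ext ?_ ?_
      · simp [Prod.fst_sum]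
      · funext k
        simp [Prod.snd_sum, Finset.sum_apply, Pi.single_apply, hsol]
    rw [h5, h6, map_add, map_sum]
    simp only [map_smul, smul_eq_mul]
  have e := congrFun (hsymm (Pi.single μ 1) (Pi.single ν 1)) j
  rw [key, key] at e
  rw [Finset.sum_sub_distrib]
  linarith
end

section
/- Let Γ^i_μ : ℝ^m × ℝ^n → ℝ (for 1 ≤ μ ≤ m, 1 ≤ i ≤ n) be smooth functions whose curvature vanishes identically: R^j_{μν} := ∂Γ^j_ν/∂x^μ − ∂Γ^j_μ/∂x^ν + Σᵢ (Γ^i_μ ∂Γ^j_ν/∂y^i − Γ^i_ν ∂Γ^j_μ/∂y^i) = 0 everywhere on ℝ^m × ℝ^n, for all μ, ν, j. Then for every point (x₀, y₀) ∈ ℝ^m × ℝ^n there exist an open neighbourhood U of x₀ in ℝ^m and a smooth map f : U → ℝ^n with f(x₀) = y₀ satisfying the first-order system of partial differential equations ∂f^i/∂x^μ(x) = Γ^i_μ(x, f(x)) for all x ∈ U and all i, μ. -/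
section FrobeniusAux

open Set Metric Filter Topology
open scoped NNReal

variable {E G : Type*} [NormedAddCommGroup E] [NormedSpace ℝ E]
  [NormedAddCommGroup G] [NormedSpace ℝ G]

/-- Picard-Lindelof on `[0,1]`, with control on the image. -/
lemma frob_picard [CompleteSpace G] (v : ℝ → G → G) (y₀ : G) (K : ℝ≥0)
    (hK : ∀ t ∈ Icc (0:ℝ) 1, LipschitzOnWith K (v t) (closedBall y₀ 1))
    (hc : ∀ y ∈ closedBall y₀ 1, ContinuousOn (fun t => v t y) (Icc (0:ℝ) 1))
    (hb : ∀ t ∈ Icc (0:ℝ) 1, ∀ y ∈ closedBall y₀ 1, ‖v t y‖ ≤ 1) :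
    ∃ α : ℝ → G, α 0 = y₀ ∧ (∀ t, α t ∈ closedBall y₀ 1) ∧
      ∀ t ∈ Icc (0:ℝ) 1, HasDerivWithinAt α (v t (α t)) (Icc 0 1) t := by
  have hf : IsPicardLindelof v (tmin := 0) (tmax := 1) ⟨0, by simp⟩ y₀ 1 0 1 K := by
    refine ⟨?_, ?_, ?_, ?_⟩
    · simpa using hK
    · simpa using hc
    · simpa using hb
    · simp
  have hx : y₀ ∈ closedBall y₀ ((0 : ℝ≥0) : ℝ) := by simp
  obtain ⟨α, hα⟩ := ODE.FunSpace.exists_isFixedPt_next hf hx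
  have h0 : α.compProj ((⟨0, by simp⟩ : Icc (0:ℝ) 1) : ℝ) = y₀ := by
    rw [ODE.FunSpace.compProj_val, ← hα, ODE.FunSpace.next_apply₀]
  refine ⟨α.compProj, h0, fun t ↦ ?_, fun t ht ↦ ?_⟩
  · simpa using α.compProj_mem_closedBall hf.mul_max_le (t := t)
  · apply ODE.hasDerivWithinAt_picard_Icc (⟨le_rfl, zero_le_one⟩ : (0:ℝ) ∈ Icc (0:ℝ) 1)
      hf.continuousOn_uncurry
      α.continuous_compProj.continuousOn (fun _ ht' ↦ α.compProj_mem_closedBall hf.mul_max_le)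
      y₀ ht |>.congr_of_mem _ ht
    intro t' ht'
    nth_rw 1 [← hα]
    rw [ODE.FunSpace.compProj_of_mem ht', ODE.FunSpace.next_apply]

lemma frob_bound_one (F : E → G) (hF : ContDiff ℝ 1 F) (S : Set E) (hS : IsCompact S) :
    ∃ B : ℝ, ∀ p ∈ S, ‖fderiv ℝ F p‖ ≤ B :=
  hS.exists_bound_of_continuousOn (f := fderiv ℝ F)
    (hF.continuous_fderiv (by norm_num)).continuousOn

/-- uniform bounds on a compact convex set -/
lemma frob_bounds (F : E → G) (hF : ContDiff ℝ 2 F) (S : Set E)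
    (hS : IsCompact S) (hconv : Convex ℝ S) :
    ∃ M : ℝ≥0, 1 ≤ M ∧ (∀ p ∈ S, ‖F p‖ ≤ M) ∧ (∀ p ∈ S, ‖fderiv ℝ F p‖ ≤ M) ∧
      (∀ p ∈ S, ∀ q ∈ S, ‖F q - F p‖ ≤ M * ‖q - p‖) ∧
      (∀ p ∈ S, ∀ q ∈ S, ‖F q - F p - fderiv ℝ F p (q - p)‖ ≤ M * ‖q - p‖ ^ 2) := by
  have hF' : ContDiff ℝ 1 (fderiv ℝ F) := hF.fderiv_right (by norm_num)
  obtain ⟨A, hA⟩ := hS.exists_bound_of_continuousOn hF.continuous.continuousOn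
  obtain ⟨B, hB⟩ := hS.exists_bound_of_continuousOn (f := fderiv ℝ F) hF'.continuous.continuousOn
  obtain ⟨C, hC⟩ := frob_bound_one (fderiv ℝ F) hF' S hS
  obtain ⟨M, hM1, hMA, hMB, hMC⟩ : ∃ M : ℝ≥0, 1 ≤ M ∧ A ≤ M ∧ B ≤ M ∧ C ≤ M := by
    have h0 : (0:ℝ) ≤ max 1 (max A (max B C)) := by positivity
    refine ⟨Real.toNNReal (max 1 (max A (max B C))), ?_, ?_, ?_, ?_⟩
    · rw [← NNReal.coe_le_coe, Real.coe_toNNReal _ h0]; simp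
    all_goals rw [Real.coe_toNNReal _ h0]; simp
  have hd : ∀ p, DifferentiableAt ℝ F p := fun p => hF.differentiable (by norm_num) p
  have hd' : ∀ p, DifferentiableAt ℝ (fderiv ℝ F) p := fun p => hF'.differentiable (by norm_num) p
  have hlip' : ∀ p ∈ S, ∀ q ∈ S, ‖fderiv ℝ F q - fderiv ℝ F p‖ ≤ M * ‖q - p‖ := fun p hp q hq =>
    hconv.norm_image_sub_le_of_norm_fderiv_le (fun x _ => hd' x)
      (fun x hx => (hC x hx).trans hMC) hp hq
  refine ⟨M, hM1, fun p hp => (hA p hp).trans hMA, fun p hp => (hB p hp).trans hMB,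
    fun p hp q hq => hconv.norm_image_sub_le_of_norm_fderiv_le (fun x _ => hd x)
      (fun x hx => (hB x hx).trans hMB) hp hq, fun p hp q hq => ?_⟩
  have hseg := hconv.segment_subset hp hq
  have := (convex_segment (𝕜 := ℝ) p q).norm_image_sub_le_of_norm_fderiv_le' (f := F)
    (φ := fderiv ℝ F p) (C := M * ‖q - p‖) (fun x _ => hd x) (fun x hx => ?_)
    (left_mem_segment ℝ p q) (right_mem_segment ℝ p q)
  · calc _ ≤ _ := this
      _ = _ := by ring
  · refine (hlip' p hp x (hseg hx)).trans ?_
    gcongr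
    obtain ⟨t, ht, rfl⟩ := (segment_eq_image' ℝ p q ▸ hx)
    simp only [add_sub_cancel_left, norm_smul, Real.norm_eq_abs, abs_of_nonneg ht.1]
    exact mul_le_of_le_one_left (norm_nonneg _) ht.2

/-- The pointwise error estimate. -/
lemma frob_err (F : E × G → E →L[ℝ] G) (D : E × G →L[ℝ] E →L[ℝ] G) (p : E × G) (M : ℝ) (hM : 1 ≤ M)
    (hflat : ∀ u v, D (u, F p u) v = D (v, F p v) u)
    (hFp : ‖F p‖ ≤ M) (hD : ‖D‖ ≤ M) (t : ℝ) (ht : t ∈ Icc (0:ℝ) 1) (h k : E)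
    (hk : ‖h + k‖ ≤ 1)
    (hT : ‖F (p + t • (k, F p k)) - F p - D (t • (k, F p k))‖ ≤ M * ‖t • (k, F p k)‖ ^ 2) :
    ‖(F p h + (F p k + t • D (h, F p h) k)) - F (p + t • (k, F p k)) (h + k)‖
      ≤ (M ^ 3 + M ^ 2) * ‖k‖ ^ 2 := by
  set δ := t • (k, F p k) with hδ
  have hδn : ‖δ‖ ≤ M * ‖k‖ := by
    have h1 : ‖(k, F p k)‖ ≤ M * ‖k‖ := by
      rw [Prod.norm_def]
      refine max_le ?_ ((F p).le_of_opNorm_le hFp k)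
      exact le_mul_of_one_le_left (norm_nonneg _) hM
    rw [hδ, norm_smul, Real.norm_eq_abs, abs_of_nonneg ht.1]
    exact (mul_le_of_le_one_left (norm_nonneg _) ht.2).trans h1
  have e : (F p h + (F p k + t • D (h, F p h) k)) - F (p + δ) (h + k)
      = -((F (p + δ) - F p - D δ) (h + k)) - D δ k := by
    have : D δ h = t • D (h, F p h) k := by
      rw [hδ, hflat h k, map_smul]; rfl
    rw [← this]
    simp only [map_add, _root_.sub_apply]
    abel
  rw [e]
  refine (norm_sub_le _ _).trans ?_
  rw [norm_neg]
  have a1 : ‖(F (p + δ) - F p - D δ) (h + k)‖ ≤ M * (M * ‖k‖) ^ 2 := by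
    refine ((ContinuousLinearMap.le_opNorm _ _).trans
      (mul_le_of_le_one_right (norm_nonneg _) hk)).trans (hT.trans ?_)
    gcongr
  have a2 : ‖D δ k‖ ≤ M * (M * ‖k‖) * ‖k‖ := by
    refine (D.le_opNorm₂ δ k).trans ?_
    gcongr
  nlinarith

lemma frob_gronwall (K ε x : ℝ) : gronwallBound 0 K ε x = gronwallBound 0 K 1 x * ε := by
  unfold gronwallBound
  split_ifs
  · ring
  · ring

lemma frob_main [FiniteDimensional ℝ E] [FiniteDimensional ℝ G]
    (F : E × G → E →L[ℝ] G) (hF : ContDiff ℝ 2 F)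
    (hflat : ∀ p u v, fderiv ℝ F p (u, F p u) v = fderiv ℝ F p (v, F p v) u)
    (x₀ : E) (y₀ : G) :
    ∃ U : Set E, IsOpen U ∧ x₀ ∈ U ∧ ∃ f : E → G, f x₀ = y₀ ∧
      ∀ x ∈ U, HasFDerivAt f (F (x, f x)) x := by
  have : ProperSpace E := FiniteDimensional.proper ℝ E
  have : ProperSpace G := FiniteDimensional.proper ℝ G
  have : CompleteSpace G := FiniteDimensional.complete ℝ G
  obtain ⟨M, hM1, hFb, hDb, hLip, hT⟩ := frob_bounds F hF (closedBall x₀ 1 ×ˢ closedBall y₀ 2)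
    ((isCompact_closedBall _ _).prod (isCompact_closedBall _ _))
    ((convex_closedBall _ _).prod (convex_closedBall _ _))
  have hM1' : (1:ℝ) ≤ M := by exact_mod_cast hM1
  have hM0 : (0:ℝ) < M := by linarith
  have hr1 : (M:ℝ)⁻¹ ≤ 1 := inv_le_one_of_one_le₀ hM1'
  have hmem : ∀ h ∈ ball (0:E) (M:ℝ)⁻¹, ∀ t ∈ Icc (0:ℝ) 1, x₀ + t • h ∈ closedBall x₀ 1 := by
    intro h hh t ht
    rw [mem_ball_zero_iff] at hh
    rw [mem_closedBall_iff_norm, add_sub_cancel_left, norm_smul, Real.norm_eq_abs,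
      abs_of_nonneg ht.1]
    nlinarith [ht.1, ht.2, norm_nonneg h]
  have hVlip : ∀ h ∈ ball (0:E) (M:ℝ)⁻¹, ∀ t ∈ Icc (0:ℝ) 1,
      LipschitzOnWith M (fun y => F (x₀ + t • h, y) h) (closedBall y₀ 2) := by
    intro h hh t ht
    refine LipschitzOnWith.of_dist_le_mul fun y hy z hz => ?_
    have h1 := hLip (x₀ + t • h, z) ⟨hmem h hh t ht, hz⟩ (x₀ + t • h, y) ⟨hmem h hh t ht, hy⟩
    rw [Prod.mk_sub_mk, sub_self, Prod.norm_mk, norm_zero, max_eq_right (norm_nonneg _)] at h1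
    rw [dist_eq_norm, dist_eq_norm, ← _root_.sub_apply]
    rw [mem_ball_zero_iff] at hh
    exact ((ContinuousLinearMap.le_opNorm _ _).trans
      (mul_le_of_le_one_right (norm_nonneg _) (by linarith))).trans h1
  have hsub : closedBall y₀ 1 ⊆ closedBall y₀ 2 := closedBall_subset_closedBall (by norm_num)
  have hex : ∀ h : E, ∃ α : ℝ → G, h ∈ ball (0:E) (M:ℝ)⁻¹ →
      α 0 = y₀ ∧ (∀ t, α t ∈ closedBall y₀ 1) ∧
      ∀ t ∈ Icc (0:ℝ) 1, HasDerivWithinAt α (F (x₀ + t • h, α t) h) (Icc 0 1) t := by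
    intro h
    by_cases hh : h ∈ ball (0:E) (M:ℝ)⁻¹
    · obtain ⟨α, hα⟩ := frob_picard (fun t y => F (x₀ + t • h, y) h) y₀ M
        (fun t ht => (hVlip h hh t ht).mono hsub)
        (fun y hy => by
          have := hF.continuous
          exact Continuous.continuousOn (by fun_prop))
        (fun t ht y hy => by
          refine ((F _).le_of_opNorm_le (hFb _ ⟨hmem h hh t ht, hsub hy⟩) h).trans ?_
          rw [mem_ball_zero_iff] at hh
          calc (M:ℝ) * ‖h‖ ≤ M * (M:ℝ)⁻¹ := by gcongr
            _ = 1 := mul_inv_cancel₀ hM0.ne')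
      exact ⟨α, fun _ => hα⟩
    · exact ⟨0, fun h => absurd h hh⟩
  choose y hy using hex
  have hright : ∀ {g : ℝ → G} {g' : G} {t : ℝ}, t ∈ Ico (0:ℝ) 1 →
      HasDerivWithinAt g g' (Icc 0 1) t → HasDerivWithinAt g g' (Ici t) t := by
    intro g g' t ht hg
    refine (hg.mono (Icc_subset_Icc_left ht.1)).mono_of_mem_nhdsWithin ?_
    exact Icc_mem_nhdsGE ht.2
  -- key estimate
  have key : ∀ h k : E, h ∈ ball (0:E) (M:ℝ)⁻¹ → h + k ∈ ball (0:E) (M:ℝ)⁻¹ → ‖k‖ ≤ (M:ℝ)⁻¹ →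
      ‖y (h + k) 1 - y h 1 - F (x₀ + h, y h 1) k‖ ≤
        gronwallBound 0 M 1 1 * ((M ^ 3 + M ^ 2) * ‖k‖ ^ 2) := by
    intro h k hh hhk hk
    obtain ⟨y0, yb, yd⟩ := hy h hh
    obtain ⟨z0, zb, zd⟩ := hy (h + k) hhk
    set w : ℝ → G := fun t => y h t + t • F (x₀ + t • h, y h t) k with hw
    have hwd : ∀ t ∈ Icc (0:ℝ) 1, HasDerivWithinAt w (F (x₀ + t • h, y h t) h +
        (F (x₀ + t • h, y h t) k + t • fderiv ℝ F (x₀ + t • h, y h t)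
          (h, F (x₀ + t • h, y h t) h) k)) (Icc 0 1) t := by
      intro t ht
      have h1 : HasDerivWithinAt (fun t : ℝ => x₀ + t • h) h (Icc 0 1) t := by
        simpa using ((hasDerivWithinAt_id t (Icc (0:ℝ) 1)).smul_const h).const_add x₀
      have h2 := h1.prodMk (yd t ht)
      have h3 : HasDerivWithinAt (fun t : ℝ => F (x₀ + t • h, y h t))
          (fderiv ℝ F (x₀ + t • h, y h t) (h, F (x₀ + t • h, y h t) h)) (Icc 0 1) t :=
        ((hF.differentiable (by norm_num) (x₀ + t • h, y h t)).hasFDerivAt).comp_hasDerivWithinAt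
          (f := fun t : ℝ => (x₀ + t • h, y h t)) t h2
      have h4 := h3.clm_apply (hasDerivWithinAt_const t (Icc (0:ℝ) 1) k)
      have h5 := (hasDerivWithinAt_id t (Icc (0:ℝ) 1)).smul h4
      refine ((yd t ht).add h5).congr_deriv ?_
      simp [add_comm]
    have hw2 : ∀ t ∈ Icc (0:ℝ) 1, w t ∈ closedBall y₀ 2 := by
      intro t ht
      have h1 := yb t
      have h2 := (F (x₀ + t • h, y h t)).le_of_opNorm_le (hFb _ ⟨hmem h hh t ht, hsub h1⟩) k
      have h3 : (M:ℝ) * ‖k‖ ≤ 1 := by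
        calc (M:ℝ) * ‖k‖ ≤ M * (M:ℝ)⁻¹ := by gcongr
          _ = 1 := mul_inv_cancel₀ hM0.ne'
      rw [mem_closedBall_iff_norm] at h1 ⊢
      have h4 : ‖t • F (x₀ + t • h, y h t) k‖ ≤ 1 := by
        rw [norm_smul, Real.norm_eq_abs, abs_of_nonneg ht.1]
        exact (mul_le_of_le_one_left (norm_nonneg _) ht.2).trans (h2.trans h3)
      calc ‖w t - y₀‖ = ‖(y h t - y₀) + t • F (x₀ + t • h, y h t) k‖ := by
            congr 1; simp only [hw]; abel
        _ ≤ _ := norm_add_le _ _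
        _ ≤ 2 := by linarith
    have hg := dist_le_of_approx_trajectories_ODE_of_mem (a := 0) (b := 1) (K := M)
      (v := fun t y => F (x₀ + t • (h + k), y) (h + k)) (s := fun _ => closedBall y₀ 2)
      (f := w) (g := y (h + k)) (εf := (M ^ 3 + M ^ 2) * ‖k‖ ^ 2) (εg := 0) (δ := 0)
      (fun t ht => hVlip _ hhk t (Ico_subset_Icc_self ht))
      (fun t ht => (hwd t ht).continuousWithinAt)
      (fun t ht => hright ht (hwd t (Ico_subset_Icc_self ht)))
      (fun t ht => ?_)
      (fun t ht => hw2 t (Ico_subset_Icc_self ht))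
      (fun t ht => (zd t ht).continuousWithinAt)
      (fun t ht => hright ht (zd t (Ico_subset_Icc_self ht)))
      (fun t ht => by simp)
      (fun t ht => hsub (zb t))
      (by simp [hw, y0, z0]) 1 (by simp)
    · rw [add_zero, sub_zero, frob_gronwall, dist_comm, dist_eq_norm] at hg
      refine le_trans (le_of_eq ?_) hg
      congr 1
      simp [hw, sub_sub]
    · have ht' := Ico_subset_Icc_self ht
      set p : E × G := (x₀ + t • h, y h t) with hp
      have hpS : p ∈ closedBall x₀ 1 ×ˢ closedBall y₀ 2 := ⟨hmem h hh t ht', hsub (yb t)⟩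
      have hq : (x₀ + t • (h + k), w t) = p + t • (k, F p k) := by
        simp [hp, hw, add_assoc]
      rw [dist_eq_norm, hq]
      have hqS : p + t • (k, F p k) ∈ closedBall x₀ 1 ×ˢ closedBall y₀ 2 := by
        rw [← hq]; exact ⟨hmem _ hhk t ht', hw2 t ht'⟩
      have hTT := hT p hpS _ hqS
      rw [add_sub_cancel_left] at hTT
      refine frob_err F (fderiv ℝ F p) p M hM1' (hflat p) (hFb p hpS) (hDb p hpS) t ht' h k ?_ hTT
      rw [mem_ball_zero_iff] at hhk
      linarith
  refine ⟨ball x₀ (M:ℝ)⁻¹, isOpen_ball, mem_ball_self (by positivity), fun x => y (x - x₀) 1,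
    ?_, ?_⟩
  · have h0 : (0:E) ∈ ball (0:E) (M:ℝ)⁻¹ := mem_ball_self (by positivity)
    obtain ⟨y0, yb, yd⟩ := hy 0 h0
    have := constant_of_has_deriv_right_zero (f := y 0) (a := 0) (b := 1)
      (fun t ht => (yd t ht).continuousWithinAt)
      (fun t ht => by simpa using hright ht (yd t (Ico_subset_Icc_self ht))) 1 (by simp)
    simp [this, y0]
  · intro x hx
    rw [hasFDerivAt_iff_isLittleO]
    have hb : (fun x' => y (x' - x₀) 1 - y (x - x₀) 1 - F (x, y (x - x₀) 1) (x' - x))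
        =O[𝓝 x] (fun x' => ‖x' - x‖ ^ 2) := by
      refine Asymptotics.IsBigO.of_bound (gronwallBound 0 M 1 1 * (M ^ 3 + M ^ 2)) ?_
      filter_upwards [isOpen_ball.mem_nhds hx, ball_mem_nhds x (inv_pos.mpr hM0)] with x' h1 h2
      have := key (x - x₀) (x' - x) (by simpa [dist_eq_norm] using hx)
        (by simpa [dist_eq_norm] using h1) (le_of_lt (by simpa [dist_eq_norm] using h2))
      rw [show x - x₀ + (x' - x) = x' - x₀ by abel, add_sub_cancel] at this
      simpa [mul_assoc] using this
    exact hb.trans_isLittleO (Asymptotics.isLittleO_pow_sub_sub x one_lt_two)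

lemma frob_smooth (F : E × G → E →L[ℝ] G) (hF : ContDiff ℝ (⊤ : ℕ∞) F) (U : Set E) (hU : IsOpen U)
    (f : E → G) (hf : ∀ x ∈ U, HasFDerivAt f (F (x, f x)) x) : ContDiffOn ℝ (⊤ : ℕ∞) f U := by
  rw [contDiffOn_infty]
  intro n
  induction n with
  | zero =>
    simp only [Nat.cast_zero, contDiffOn_zero]
    exact fun x hx => (hf x hx).continuousAt.continuousWithinAt
  | succ n ih =>
    push_cast
    rw [contDiffOn_succ_iff_fderiv_of_isOpen hU]
    refine ⟨fun x hx => (hf x hx).differentiableAt.differentiableWithinAt, by simp, ?_⟩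
    have : ContDiffOn ℝ n (fun x => F (x, f x)) U :=
      (hF.of_le (by exact_mod_cast le_top)).comp_contDiffOn (contDiffOn_id.prodMk ih)
    exact this.congr fun x hx => (hf x hx).fderiv

end FrobeniusAux

/-- Sufficiency direction of the integrability Proposition: if the curvature of
the connection with coefficients `Γ^i_μ` vanishes identically, then through every
point `(x₀, y₀)` there is a local solution of the PDE system
`∂f^i/∂x^μ = Γ^i_μ(x, f(x))`. -/
theorem stmt_7 {m n : ℕ}
    (Γ : Fin m → Fin n → ((Fin m → ℝ) × (Fin n → ℝ)) → ℝ)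
    (hΓ : ∀ μ i, ContDiff ℝ (⊤ : ℕ∞) (Γ μ i))
    (hflat : ∀ (p : (Fin m → ℝ) × (Fin n → ℝ)) (μ ν : Fin m) (j : Fin n),
      fderiv ℝ (Γ ν j) p (Pi.single μ 1, 0)
        - fderiv ℝ (Γ μ j) p (Pi.single ν 1, 0)
        + ∑ i : Fin n,
            (Γ μ i p * fderiv ℝ (Γ ν j) p (0, Pi.single i 1)
              - Γ ν i p * fderiv ℝ (Γ μ j) p (0, Pi.single i 1))
      = 0) :
    ∀ (x₀ : Fin m → ℝ) (y₀ : Fin n → ℝ),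
      ∃ U : Set (Fin m → ℝ), IsOpen U ∧ x₀ ∈ U ∧
        ∃ f : (Fin m → ℝ) → (Fin n → ℝ), ContDiffOn ℝ (⊤ : ℕ∞) f U ∧ f x₀ = y₀ ∧
          ∀ x ∈ U, ∀ (μ : Fin m) (i : Fin n),
            fderiv ℝ f x (Pi.single μ 1) i = Γ μ i (x, f x) := by
  intro x₀ y₀
  let F : (Fin m → ℝ) × (Fin n → ℝ) → (Fin m → ℝ) →L[ℝ] (Fin n → ℝ) := fun p =>
    ContinuousLinearMap.pi fun i => ∑ μ, Γ μ i p • ContinuousLinearMap.proj (R := ℝ) (φ := fun _ : Fin m => ℝ) μ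
  have hFapp : ∀ p v i, F p v i = ∑ μ, Γ μ i p * v μ := by
    intro p v i
    simp [F]
  have hF : ContDiff ℝ (⊤ : ℕ∞) F := by
    rw [contDiff_clm_apply_iff]
    intro v
    rw [contDiff_pi]
    intro i
    simp only [hFapp]
    exact ContDiff.sum fun μ _ => (hΓ μ i).mul contDiff_const
  have hFd : Differentiable ℝ F := hF.differentiable (by simp)
  have hΓd : ∀ μ i, Differentiable ℝ (Γ μ i) := fun μ i => (hΓ μ i).differentiable (by simp)
  have hDF : ∀ p w v j, fderiv ℝ F p w v j = ∑ μ, fderiv ℝ (Γ μ j) p w * v μ := by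
    intro p w v j
    have h1 := (hFd p).hasFDerivAt.clm_apply (hasFDerivAt_const v p)
    have h2 := (hasFDerivAt_pi'.1 h1) j
    simp only [hFapp] at h2
    have h3 : HasFDerivAt (fun p => ∑ μ, Γ μ j p * v μ) (∑ μ, (v μ) • fderiv ℝ (Γ μ j) p) p :=
      HasFDerivAt.fun_sum fun μ _ => (hΓd μ j p).hasFDerivAt.mul_const (v μ)
    have h4 := congrArg (fun L => L w) (h2.unique h3)
    simpa [_root_.sum_apply, mul_comm] using h4
  have hdir : ∀ p u μ j, fderiv ℝ (Γ μ j) p (u, F p u) =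
      ∑ ν, u ν * (fderiv ℝ (Γ μ j) p (Pi.single ν 1, 0) +
        ∑ i, Γ ν i p * fderiv ℝ (Γ μ j) p (0, Pi.single i 1)) := by
    intro p u μ j
    set L := fderiv ℝ (Γ μ j) p with hL
    have hs : ∀ {d : ℕ} (i : Fin d), (fun j => if i = j then (1:ℝ) else 0) = Pi.single i 1 := by
      intro d i
      ext j
      simp [Pi.single_apply, eq_comm]
    have e1 : L (u, 0) = ∑ ν, u ν * L (Pi.single ν 1, 0) := by
      have := (L.comp (ContinuousLinearMap.inl ℝ (Fin m → ℝ) (Fin n → ℝ))).toLinearMap.pi_apply_eq_sum_univ u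
      simpa [hs] using this
    have e2 : ∀ z, L (0, z) = ∑ i, z i * L (0, Pi.single i 1) := by
      intro z
      have := (L.comp (ContinuousLinearMap.inr ℝ (Fin m → ℝ) (Fin n → ℝ))).toLinearMap.pi_apply_eq_sum_univ z
      simpa [hs] using this
    have e3 : (u, F p u) = (u, 0) + (0, F p u) := by simp
    rw [e3, map_add, e1, e2]
    simp only [mul_add, Finset.sum_add_distrib, hFapp, Finset.sum_mul, Finset.mul_sum]
    congr 1
    rw [Finset.sum_comm]
    refine Finset.sum_congr rfl fun ν _ => Finset.sum_congr rfl fun i _ => by ring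
  have hsymm : ∀ p u v, fderiv ℝ F p (u, F p u) v = fderiv ℝ F p (v, F p v) u := by
    intro p u v
    ext j
    simp only [hDF, hdir, Finset.sum_mul]
    rw [Finset.sum_comm]
    refine Finset.sum_congr rfl fun ν _ => Finset.sum_congr rfl fun μ _ => ?_
    have h := hflat p ν μ j
    rw [Finset.sum_sub_distrib] at h
    linear_combination (u ν * v μ) * h
  obtain ⟨U, hU, hx, f, hf0, hf⟩ := frob_main F (contDiff_infty.1 hF 2) hsymm x₀ y₀
  refine ⟨U, hU, hx, f, frob_smooth F hF U hU f hf, hf0, fun x hxU μ i => ?_⟩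
  rw [(hf x hxU).fderiv, hFapp]
  simp [Pi.single_apply]
end

section
/- Let Γ : ℝ^m × ℝ^n → L(ℝ^m, ℝ^n) assign to each point (x, y) a linear map Γ(x,y) : ℝ^m → ℝ^n, such that for each fixed x the map y ↦ Γ(x, y) is differentiable at y = 0. Suppose that for every t > 0 and every (x, y), the image of the subspace graph(Γ(x,y)) = {(a, Γ(x,y)(a)) : a ∈ ℝ^m} ⊆ ℝ^m × ℝ^n under the linear map (a, b) ↦ (a, t • b) equals graph(Γ(x, t • y)). Then for every x the map y ↦ Γ(x, y) is linear in y (it equals its derivative at y = 0). -/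
/-- Coordinate form of the implication (2 ⇒ 3) in Theorem 4.4: if the fiber-scaling
flow `(a, b) ↦ (a, t • b)` maps the horizontal subspace `graph Γ(x,y)` onto
`graph Γ(x, t • y)` for all `t > 0`, then `Γ(x, ·)` is linear in the fiber
variable, equal to its derivative at `0`. -/
theorem stmt_9 {m n : ℕ}
    (Γ : (Fin m → ℝ) → (Fin n → ℝ) → ((Fin m → ℝ) →L[ℝ] (Fin n → ℝ)))
    (hdiff : ∀ x, DifferentiableAt ℝ (Γ x) 0)
    (hflow : ∀ t : ℝ, 0 < t → ∀ (x : Fin m → ℝ) (y : Fin n → ℝ),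
      Submodule.map
        ((LinearMap.id : (Fin m → ℝ) →ₗ[ℝ] (Fin m → ℝ)).prodMap
          (t • (LinearMap.id : (Fin n → ℝ) →ₗ[ℝ] (Fin n → ℝ))))
        (LinearMap.graph (Γ x y).toLinearMap)
      = LinearMap.graph (Γ x (t • y)).toLinearMap) :
    ∀ (x : Fin m → ℝ) (y : Fin n → ℝ), Γ x y = fderiv ℝ (Γ x) 0 y := by
  have hom : ∀ t : ℝ, 0 < t → ∀ x y, Γ x (t • y) = t • Γ x y := by
    intro t ht x y
    ext1 a
    have h : ((a, t • Γ x y a) : (Fin m → ℝ) × (Fin n → ℝ)) ∈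
        LinearMap.graph (Γ x (t • y)).toLinearMap := by
      rw [← hflow t ht x y]
      exact ⟨(a, Γ x y a), by simp [LinearMap.mem_graph_iff], by simp⟩
    rw [LinearMap.mem_graph_iff] at h
    exact h.symm
  intro x y
  have h0 : Γ x 0 = 0 := by
    have h := hom 2 two_pos x 0
    rw [smul_zero, two_smul] at h
    exact left_eq_add.mp h
  have h1 : HasDerivAt (fun t : ℝ => t • y) y 0 := by
    simpa using (hasDerivAt_id (0 : ℝ)).smul_const y
  have hd : HasFDerivAt (Γ x) (fderiv ℝ (Γ x) 0) ((0 : ℝ) • y) := by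
    rw [zero_smul]
    exact (hdiff x).hasFDerivAt
  have h2 : HasDerivWithinAt (fun t : ℝ => Γ x (t • y)) (fderiv ℝ (Γ x) 0 y) (Set.Ici 0) 0 :=
    (hd.comp_hasDerivAt (0 : ℝ) h1).hasDerivWithinAt
  have h3 : HasDerivWithinAt (fun t : ℝ => t • Γ x y) (Γ x y) (Set.Ici 0) 0 := by
    simpa using ((hasDerivAt_id (0 : ℝ)).smul_const (Γ x y)).hasDerivWithinAt (s := Set.Ici 0)
  have h4 : HasDerivWithinAt (fun t : ℝ => Γ x (t • y)) (Γ x y) (Set.Ici 0) 0 := by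
    refine h3.congr ?_ (by simp [h0])
    intro t ht
    rcases (Set.mem_Ici.mp ht).eq_or_lt with h | h
    · simp [← h, h0]
    · exact hom t h x y
  exact (uniqueDiffOn_Ici (0 : ℝ) 0 Set.self_mem_Ici).eq_deriv _ h4 h2
end

section
/- Let σ : ℝ → ℝ^m be a continuously differentiable curve, let Γ : ℝ^m → L(ℝ^m, L(ℝ^n, ℝ^n)) be a continuous map (the Christoffel symbols in coordinates), and let u₀ ∈ ℝ^n. Then there exists a unique differentiable map V : ℝ → ℝ^n such that V(0) = u₀ and V′(t) = −Γ(σ(t))(σ′(t))(V(t)) for all t ∈ ℝ. -/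
open MeasureTheory intervalIntegral Set in
/-- Global existence for a linear ODE, via a contraction in a weighted sup norm. -/
theorem linear_ode_exists {E : Type*} [NormedAddCommGroup E] [NormedSpace ℝ E] [CompleteSpace E]
    (A : ℝ → E →L[ℝ] E) (hA : Continuous A) (u₀ : E) :
    ∃ V : ℝ → E, V 0 = u₀ ∧ ∀ t, HasDerivAt V (A t (V t)) t := by
  have hm : Continuous fun t => ‖A t‖ := hA.norm
  set P : ℝ → ℝ := fun t => ∫ s in (0:ℝ)..t, ‖A s‖ with hP
  have hPd : ∀ t, HasDerivAt P (‖A t‖) t := fun t =>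
    integral_hasDerivAt_right (hm.intervalIntegrable _ _)
      (hm.stronglyMeasurableAtFilter _ _) hm.continuousAt
  have hPc : Continuous P := continuous_iff_continuousAt.2 fun t => (hPd t).continuousAt
  set φ : ℝ → ℝ := fun t => Real.cosh (2 * P t) with hφ
  have hφc : Continuous φ := Real.continuous_cosh.comp (continuous_const.mul hPc)
  have hφ1 : ∀ t, 1 ≤ φ t := fun t => Real.one_le_cosh _
  have hφ0 : ∀ t, 0 < φ t := fun t => zero_lt_one.trans_le (hφ1 t)
  have hint : ∀ t, |∫ s in (0:ℝ)..t, ‖A s‖ * φ s| ≤ φ t / 2 := by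
    intro t
    have h : ∫ s in (0:ℝ)..t, ‖A s‖ * φ s
        = Real.sinh (2 * P t) / 2 - Real.sinh (2 * P 0) / 2 := by
      refine integral_eq_sub_of_hasDerivAt (f := fun t => Real.sinh (2 * P t) / 2)
        (fun s _ => ?_) ((hm.mul hφc).intervalIntegrable _ _)
      refine ((((hPd s).const_mul 2).sinh).div_const 2).congr_deriv ?_
      change Real.cosh (2 * P s) * (2 * ‖A s‖) / 2 = ‖A s‖ * Real.cosh (2 * P s)
      ring
    have h0 : P 0 = 0 := by simp [hP]
    rw [h, h0]
    have h1 : |Real.sinh (2 * P t)| ≤ Real.cosh (2 * P t) := by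
      rw [abs_le]
      have := Real.cosh_add_sinh (2 * P t)
      have := Real.cosh_sub_sinh (2 * P t)
      have := Real.exp_pos (2 * P t)
      have := Real.exp_pos (-(2 * P t))
      constructor <;> linarith
    simp only [mul_zero, Real.sinh_zero, zero_div, sub_zero, abs_div, abs_two]
    exact div_le_div_of_nonneg_right h1 (by norm_num)
  have hcont : ∀ w : BoundedContinuousFunction ℝ E,
      Continuous fun s => A s (φ s • w s) := fun w =>
    hA.clm_apply (hφc.smul w.continuous)
  have hbound : ∀ (w : BoundedContinuousFunction ℝ E) (t : ℝ),
      ‖∫ s in (0:ℝ)..t, A s (φ s • w s)‖ ≤ ‖w‖ * (φ t / 2) := by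
    intro w t
    calc ‖∫ s in (0:ℝ)..t, A s (φ s • w s)‖
        ≤ |∫ s in (0:ℝ)..t, ‖w‖ * (‖A s‖ * φ s)| := by
          refine norm_integral_le_abs_of_norm_le (Filter.Eventually.of_forall fun s => ?_)
            ((continuous_const.mul (hm.mul hφc)).intervalIntegrable _ _)
          calc ‖A s (φ s • w s)‖ ≤ ‖A s‖ * ‖φ s • w s‖ := (A s).le_opNorm _
            _ = ‖A s‖ * (φ s * ‖w s‖) := by
              rw [norm_smul, Real.norm_of_nonneg (hφ0 s).le]
            _ ≤ ‖A s‖ * (φ s * ‖w‖) := by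
              have := w.norm_coe_le_norm s
              have := (hφ0 s).le
              gcongr
            _ = _ := by ring
      _ = ‖w‖ * |∫ s in (0:ℝ)..t, ‖A s‖ * φ s| := by
          rw [intervalIntegral.integral_const_mul, abs_mul, abs_norm]
      _ ≤ _ := by gcongr; exact hint t
  let T : BoundedContinuousFunction ℝ E → BoundedContinuousFunction ℝ E := fun w =>
    BoundedContinuousFunction.ofNormedAddCommGroup
      (fun t => (φ t)⁻¹ • (u₀ + ∫ s in (0:ℝ)..t, A s (φ s • w s)))
      ((hφc.inv₀ fun t => (hφ0 t).ne').smul (continuous_const.add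
        (intervalIntegral.continuous_primitive
          (fun a b => (hcont w).intervalIntegrable a b) 0)))
      (‖u₀‖ + ‖w‖)
      (by
        intro t
        rw [norm_smul, norm_inv, Real.norm_of_nonneg (hφ0 t).le, inv_mul_le_iff₀ (hφ0 t)]
        have h1 := norm_add_le u₀ (∫ s in (0:ℝ)..t, A s (φ s • w s))
        have h2 := hbound w t
        nlinarith [hφ1 t, norm_nonneg u₀, norm_nonneg w,
          mul_nonneg (norm_nonneg w) (hφ0 t).le,
          mul_nonneg (norm_nonneg u₀) (sub_nonneg.2 (hφ1 t))])
  have hT : ∀ w t, T w t = (φ t)⁻¹ • (u₀ + ∫ s in (0:ℝ)..t, A s (φ s • w s)) :=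
    fun _ _ => rfl
  have hC : ContractingWith (1/2) T := by
    refine ⟨by rw [← NNReal.coe_lt_coe]; norm_num, LipschitzWith.of_dist_le_mul fun w z => ?_⟩
    rw [BoundedContinuousFunction.dist_le (by positivity)]
    intro t
    have hsub : T w t - T z t = (φ t)⁻¹ • ∫ s in (0:ℝ)..t, A s (φ s • (w - z) s) := by
      rw [hT, hT, ← smul_sub, add_sub_add_left_eq_sub,
        ← intervalIntegral.integral_sub ((hcont w).intervalIntegrable _ _)
          ((hcont z).intervalIntegrable _ _)]
      simp [smul_sub]
    rw [dist_eq_norm, dist_eq_norm, hsub, norm_smul, norm_inv, Real.norm_of_nonneg (hφ0 t).le,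
      inv_mul_le_iff₀ (hφ0 t)]
    refine (hbound (w - z) t).trans (le_of_eq ?_)
    push_cast
    ring
  obtain ⟨w, hw⟩ : ∃ w, T w = w := ⟨_, hC.fixedPoint_isFixedPt⟩
  have hV : ∀ t, φ t • w t = u₀ + ∫ s in (0:ℝ)..t, A s (φ s • w s) := by
    intro t
    conv_lhs => rw [← hw, hT, smul_inv_smul₀ (hφ0 t).ne']
  refine ⟨fun t => φ t • w t, ?_, fun t => ?_⟩
  · simp only [hV 0, integral_same, add_zero]
  · have h := (integral_hasDerivAt_right ((hcont w).intervalIntegrable 0 t)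
      ((hcont w).stronglyMeasurableAtFilter _ _) (hcont w).continuousAt).const_add u₀
    exact h.congr_of_eventuallyEq (Filter.Eventually.of_forall hV)

open Set in
/-- Uniqueness for a linear ODE with continuous coefficients. -/
theorem linear_ode_unique {E : Type*} [NormedAddCommGroup E] [NormedSpace ℝ E]
    (A : ℝ → E →L[ℝ] E) (hA : Continuous A) (V W : ℝ → E) (h0 : V 0 = W 0)
    (hV : ∀ t, HasDerivAt V (A t (V t)) t) (hW : ∀ t, HasDerivAt W (A t (W t)) t) :
    V = W := by
  ext t
  obtain ⟨C, hC⟩ := (isCompact_Icc (a := -(|t| + 1)) (b := |t| + 1)).exists_bound_of_continuousOn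
    hA.continuousOn
  refine ODE_solution_unique_of_mem_Ioo (v := fun t x => A t x) (s := fun _ => univ)
    (K := C.toNNReal) (a := -(|t| + 1)) (b := |t| + 1) (t₀ := 0) (fun s hs => ?_) ?_
    (fun s _ => ⟨hV s, trivial⟩) (fun s _ => ⟨hW s, trivial⟩) h0 ?_
  · refine (((A s).lipschitz).weaken ?_).lipschitzOnWith
    rw [← NNReal.coe_le_coe]
    exact (hC s (Ioo_subset_Icc_self hs)).trans (Real.le_coe_toNNReal C)
  · constructor <;> linarith [abs_nonneg t]
  · constructor <;> linarith [neg_abs_le t, le_abs_self t]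

/-- Coordinate form of the parallel-transport claim: along a `C¹` curve `σ`, for
each initial value `u₀` there is a unique parallel vector field `V` along `σ`,
i.e., a unique solution of `V'(t) = −Γ(σ(t))(σ'(t))(V(t))`, `V(0) = u₀`. -/
theorem stmt_12 {m n : ℕ}
    (σ : ℝ → (Fin m → ℝ)) (hσ : ContDiff ℝ 1 σ)
    (Γ : (Fin m → ℝ) → ((Fin m → ℝ) →L[ℝ] ((Fin n → ℝ) →L[ℝ] (Fin n → ℝ))))
    (hΓ : Continuous Γ) (u₀ : Fin n → ℝ) :
    ∃! V : ℝ → (Fin n → ℝ), V 0 = u₀ ∧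
      ∀ t : ℝ, HasDerivAt V (-(Γ (σ t) (deriv σ t) (V t))) t := by
  have hA : Continuous fun t => -(Γ (σ t) (deriv σ t)) :=
    ((hΓ.comp hσ.continuous).clm_apply (hσ.continuous_deriv le_rfl)).neg
  obtain ⟨V, hV0, hV⟩ := linear_ode_exists _ hA u₀
  refine ⟨V, ⟨hV0, hV⟩, fun W hW => ?_⟩
  exact linear_ode_unique _ hA W V (hW.1.trans hV0.symm) hW.2 hV
end
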